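/- Let n ≥ 1, ω ∈ ℕ, γ > 0, and E_ω > 0. For each s > ω let c_s ∈ ℕ, ϑ_s ≥ 1, and ε_s > 0, and assume: (i) ∑_{s>ω} c_s ϑ_s² ε_s² / n ≤ E_ω (the total MSE reduction beyond scale ω cannot exceed the remaining MSE E_ω); (ii) ε_s ≥ ε_{ω+1} for all s > ω (the tolerances are nondecreasing beyond scale ω); and (iii) ε_{ω+1} ≥ γ √(n E_ω) / ϑ_{ω+1}². Then the number of sparse-representation elements missed by truncating at scale ω is bounded: ∑_{s>ω} c_s ≤ n E_ω / ε_{ω+1}² ≤ ϑ_{ω+1}⁴ / γ². -/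

import Mathlib

/-!
The first inequality is Markov's inequality for the counting weights `c_s`: every element counted
by `c_s` reduces the MSE by `ϑ_s² ε_s² / n ≥ ε_{ω+1}² / n`, and the total reduction is at most
`E_ω`. The second one is the lower bound on `ε_{ω+1}`, squared.
-/

theorem summable_of_summable_mul_of_le {ι : Type*} {f w : ι → ℝ} {a : ℝ} (ha : 0 < a)
    (hf : ∀ i, 0 ≤ f i) (hw : ∀ i, a ≤ w i) (hfw : Summable fun i => f i * w i) :
    Summable f :=
  (summable_mul_right_iff ha.ne').1 <|
    hfw.of_nonneg_of_le (fun i => mul_nonneg (hf i) ha.le)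
      fun i => mul_le_mul_of_nonneg_left (hw i) (hf i)

theorem tsum_le_tsum_mul_div_of_le {ι : Type*} {f w : ι → ℝ} {a : ℝ} (ha : 0 < a)
    (hf : ∀ i, 0 ≤ f i) (hw : ∀ i, a ≤ w i) (hfw : Summable fun i => f i * w i) :
    ∑' i, f i ≤ (∑' i, f i * w i) / a := by
  have hfa : Summable fun i => f i * a := (summable_of_summable_mul_of_le ha hf hw hfw).mul_right a
  rw [le_div_iff₀ ha, ← tsum_mul_right]
  exact hfa.tsum_le_tsum (fun i => mul_le_mul_of_nonneg_left (hw i) (hf i)) hfw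

theorem div_sq_le_sq_div_sq_of_mul_sqrt_div_le {x t e γ : ℝ} (hγ : 0 < γ) (ht : 0 < t)
    (he : 0 < e) (h : γ * √x / t ≤ e) : x / e ^ 2 ≤ t ^ 2 / γ ^ 2 := by
  have hsqrt : √x ≤ t / γ * e := by
    rw [div_le_iff₀ ht] at h
    rw [div_mul_eq_mul_div, le_div_iff₀ hγ]
    linarith
  have hx : x ≤ (t / γ * e) ^ 2 := (Real.sqrt_le_left (by positivity)).1 hsqrt
  rwa [div_le_iff₀ (by positivity), ← div_pow, ← mul_pow]

/-- Bound on the number of sparse-representation elements missed by truncating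
at scale `ω`: if the total MSE reduction beyond scale `ω` does not exceed the
remaining MSE `E_ω`, the tolerances are nondecreasing beyond `ω`, `ϑ_s ≥ 1`,
and `ε_{ω+1} ≥ γ√(nE_ω)/ϑ_{ω+1}²`, then
`∑_{s>ω} c_s ≤ nE_ω/ε_{ω+1}² ≤ ϑ_{ω+1}⁴/γ²`. -/
theorem missed_sparse_elements_bound
    (n : ℕ) (hn : 1 ≤ n) (ω : ℕ) (γ : ℝ) (hγ : 0 < γ)
    (Eω : ℝ) (hEω : 0 < Eω)
    (c : ℕ → ℕ) (ϑ ε : ℕ → ℝ)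
    (hϑ : ∀ s, ω < s → 1 ≤ ϑ s)
    (hε : ∀ s, ω < s → 0 < ε s)
    (hsum : Summable (fun s : {s : ℕ // ω < s} =>
      (c s.1 : ℝ) * ϑ s.1 ^ 2 * ε s.1 ^ 2 / n))
    (hred : (∑' s : {s : ℕ // ω < s}, (c s.1 : ℝ) * ϑ s.1 ^ 2 * ε s.1 ^ 2 / n) ≤ Eω)
    (hmono : ∀ s, ω < s → ε (ω + 1) ≤ ε s)
    (hinit : γ * Real.sqrt (n * Eω) / ϑ (ω + 1) ^ 2 ≤ ε (ω + 1)) :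
    (∑' s : {s : ℕ // ω < s}, (c s.1 : ℝ)) ≤ n * Eω / ε (ω + 1) ^ 2 ∧
    n * Eω / ε (ω + 1) ^ 2 ≤ ϑ (ω + 1) ^ 4 / γ ^ 2 := by
  have hn_pos : (0 : ℝ) < n := Nat.cast_pos.2 hn
  have hε_pos : 0 < ε (ω + 1) := hε _ ω.lt_succ_self
  have hbase_pos : 0 < ε (ω + 1) ^ 2 / n := div_pos (pow_pos hε_pos 2) hn_pos
  have hϑ_pos : 0 < ϑ (ω + 1) := one_pos.trans_le (hϑ _ ω.lt_succ_self)
  have hweight (s : {s : ℕ // ω < s}) :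
      ε (ω + 1) ^ 2 / n ≤ ϑ s.1 ^ 2 * ε s.1 ^ 2 / n := by
    gcongr
    calc ε (ω + 1) ^ 2 ≤ ε s.1 ^ 2 := pow_le_pow_left₀ hε_pos.le (hmono _ s.2) 2
      _ ≤ ϑ s.1 ^ 2 * ε s.1 ^ 2 :=
        le_mul_of_one_le_left (sq_nonneg _) (one_le_pow₀ (hϑ _ s.2))
  simp only [mul_assoc, mul_div_assoc] at hsum hred hweight
  constructor
  · calc ∑' s : {s : ℕ // ω < s}, (c s.1 : ℝ)
        ≤ (∑' s : {s : ℕ // ω < s}, (c s.1 : ℝ) * (ϑ s.1 ^ 2 * (ε s.1 ^ 2 / n))) /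
            (ε (ω + 1) ^ 2 / n) :=
          tsum_le_tsum_mul_div_of_le hbase_pos (fun _ => Nat.cast_nonneg _) hweight hsum
      _ ≤ Eω / (ε (ω + 1) ^ 2 / n) := by gcongr
      _ = n * Eω / ε (ω + 1) ^ 2 := by rw [div_div_eq_mul_div, mul_comm]
  · simpa only [← pow_mul] using
      div_sq_le_sq_div_sq_of_mul_sqrt_div_le hγ (pow_pos hϑ_pos 2) hε_pos hinit
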